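/- Let K be a Markov kernel on a measurable space X that is reversible with respect to a probability measure π and has absolute spectral gap γ ∈ (0,1]. Let Ω ≥ 1 and let μ̃ be a probability measure that is Ω-warm with respect to π. Let P ≥ 1 be an integer and let (X_1,…,X_P) have the chain law of length P for (K, μ̃). Let G : X → ℝ be measurable with G ≥ 0, ∫ G² dπ < ∞, ∫ G dπ > 0, and Var_π(G) > 0; set χ = √(Var_π(G)) / ∫ G dπ. Then for every β ∈ (0,1) with β ≥ χ/2: P( P^{-1}·Σ_{p=1}^P G(X_p) ≤ (1−β)·∫ G dπ ) ≤ Ω·exp( −(Pγ/2)·min( (β/(2χ) − 1/4)², (β − χ/2)/10 ) ). -/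

import Mathlib

open MeasureTheory

/-- Reversibility of the kernel `K` with respect to `π`. -/
def Reversible {X : Type*} [MeasurableSpace X] (K : X → Measure X) (π : Measure X) : Prop :=
  ∀ A B : Set X, MeasurableSet A → MeasurableSet B →
    ∫⁻ x in A, K x B ∂π = ∫⁻ x in B, K x A ∂π

/-- `K` has absolute spectral gap `γ` (stated with squared `L²(π)` norms). -/
def HasAbsSpectralGap {X : Type*} [MeasurableSpace X] (K : X → Measure X) (π : Measure X)
    (γ : ℝ) : Prop :=
  ∀ h : X → ℝ, MemLp h 2 π → ∫ x, h x ∂π = 0 →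
    ∫ x, (∫ y, h y ∂(K x)) ^ 2 ∂π ≤ (1 - γ) ^ 2 * ∫ x, (h x) ^ 2 ∂π

/-- `μ` is `Ω`-warm with respect to `π`: `μ(A) ≤ Ω π(A)` for all measurable `A`. -/
def IsWarm {X : Type*} [MeasurableSpace X] (μ π : Measure X) (ω : ℝ) : Prop :=
  ∀ A : Set X, MeasurableSet A → μ A ≤ ENNReal.ofReal ω * π A

/-- The law of `(X_1, …, X_{n+1})` for a Markov chain with kernel `K` and initial
distribution `μ`. -/
noncomputable def chainLaw {X : Type*} [MeasurableSpace X] (K : X → Measure X)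
    (μ : Measure X) : (n : ℕ) → Measure (Fin (n + 1) → X)
  | 0 => μ.map (fun x => fun _ => x)
  | n + 1 => (chainLaw K μ n).bind (fun xs => (K (xs (Fin.last n))).map (Fin.snoc xs))

open ProbabilityTheory

/-- Bounded measurable functions. -/
def BddMeas {X : Type*} [MeasurableSpace X] (f : X → ℝ) : Prop :=
  Measurable f ∧ ∃ C : ℝ, ∀ x, |f x| ≤ C

lemma BddMeas.integrable {X : Type*} [MeasurableSpace X] {f : X → ℝ} (hf : BddMeas f)
    (μ : Measure X) [IsFiniteMeasure μ] : Integrable f μ := by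
  obtain ⟨hm, C, hC⟩ := hf
  exact Integrable.of_bound hm.aestronglyMeasurable C (ae_of_all _ hC)

lemma BddMeas.memLp {X : Type*} [MeasurableSpace X] {f : X → ℝ} (hf : BddMeas f)
    (μ : Measure X) [IsFiniteMeasure μ] : MemLp f 2 μ := by
  obtain ⟨hm, C, hC⟩ := hf
  exact MemLp.of_bound hm.aestronglyMeasurable C (ae_of_all _ hC)

lemma BddMeas.mul {X : Type*} [MeasurableSpace X] {f g : X → ℝ} (hf : BddMeas f)
    (hg : BddMeas g) : BddMeas (fun x => f x * g x) := by
  obtain ⟨hm, C, hC⟩ := hf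
  obtain ⟨hm', C', hC'⟩ := hg
  refine ⟨hm.mul hm', C * C', fun x => ?_⟩
  rw [abs_mul]
  exact mul_le_mul (hC x) (hC' x) (abs_nonneg _) ((abs_nonneg _).trans (hC x))

lemma BddMeas.sq {X : Type*} [MeasurableSpace X] {f : X → ℝ} (hf : BddMeas f) :
    BddMeas (fun x => f x ^ 2) := by
  simpa only [pow_two] using hf.mul hf

lemma BddMeas.sub {X : Type*} [MeasurableSpace X] {f g : X → ℝ} (hf : BddMeas f)
    (hg : BddMeas g) : BddMeas (fun x => f x - g x) := by
  obtain ⟨hm, C, hC⟩ := hf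
  obtain ⟨hm', C', hC'⟩ := hg
  refine ⟨hm.sub hm', C + C', fun x => (abs_sub _ _).trans (add_le_add (hC x) (hC' x))⟩

lemma BddMeas.const {X : Type*} [MeasurableSpace X] (c : ℝ) : BddMeas (fun _ : X => c) :=
  ⟨measurable_const, |c|, fun _ => le_rfl⟩

lemma BddMeas.kernel {X : Type*} [MeasurableSpace X] {K : X → Measure X}
    (hK : ∀ x, IsProbabilityMeasure (K x)) (hKmeas : Measurable K) {f : X → ℝ}
    (hf : BddMeas f) : BddMeas (fun x => ∫ y, f y ∂(K x)) := by
  obtain ⟨hm, C, hC⟩ := hf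
  let κ : Kernel X X := ⟨K, hKmeas⟩
  have : IsMarkovKernel κ := ⟨hK⟩
  refine ⟨?_, C, fun x => ?_⟩
  · have := (hm.stronglyMeasurable.integral_kernel (κ := κ)).measurable
    exact this
  · have := hK x
    have := norm_integral_le_of_norm_le_const (μ := K x) (ae_of_all _ (fun y => hC y) : ∀ᵐ y ∂(K x), ‖f y‖ ≤ C)
    simpa using this

lemma bind_invariant {X : Type*} [MeasurableSpace X] {K : X → Measure X} {π : Measure X}
    (hK : ∀ x, IsProbabilityMeasure (K x)) (hKmeas : Measurable K)
    (hrev : Reversible K π) : π.bind K = π := by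
  ext B hB
  rw [Measure.bind_apply hB hKmeas.aemeasurable]
  have := hrev Set.univ B MeasurableSet.univ hB
  simpa using this

lemma integral_invariant {X : Type*} [MeasurableSpace X] {K : X → Measure X} {π : Measure X}
    [IsProbabilityMeasure π]
    (hK : ∀ x, IsProbabilityMeasure (K x)) (hKmeas : Measurable K)
    (hrev : Reversible K π) {f : X → ℝ} (hf : BddMeas f) (h0 : ∀ x, 0 ≤ f x) :
    ∫ x, (∫ y, f y ∂(K x)) ∂π = ∫ x, f x ∂π := by
  have hk := hf.kernel hK hKmeas
  have hk0 : ∀ x, 0 ≤ ∫ y, f y ∂(K x) := fun x => integral_nonneg h0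
  rw [← ENNReal.ofReal_eq_ofReal_iff (integral_nonneg hk0) (integral_nonneg h0),
    ofReal_integral_eq_lintegral_ofReal (hk.integrable π) (ae_of_all _ hk0),
    ofReal_integral_eq_lintegral_ofReal (hf.integrable π) (ae_of_all _ h0)]
  conv_rhs => rw [← bind_invariant hK hKmeas hrev]
  rw [Measure.lintegral_bind hKmeas.aemeasurable (hf.1.ennreal_ofReal.aemeasurable)]
  refine lintegral_congr fun x => ?_
  have := hK x
  rw [ofReal_integral_eq_lintegral_ofReal (hf.integrable (K x)) (ae_of_all _ h0)]

lemma var_expand {X : Type*} [MeasurableSpace X] {π : Measure X} [IsProbabilityMeasure π]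
    {p : X → ℝ} (hp : BddMeas p) :
    ∫ x, (p x - ∫ y, p y ∂π) ^ 2 ∂π = ∫ x, p x ^ 2 ∂π - (∫ x, p x ∂π) ^ 2 := by
  set m := ∫ y, p y ∂π with hm
  have : ∀ x, (p x - m) ^ 2 = p x ^ 2 - (2 * m) * p x + m ^ 2 := fun x => by ring
  simp_rw [this]
  have i0 : Integrable (fun x => p x ^ 2 - (2 * m) * p x) π :=
    (hp.sq.integrable π).sub ((hp.integrable π).const_mul _)
  rw [integral_add i0 (integrable_const _),
    integral_sub (hp.sq.integrable π) ((hp.integrable π).const_mul _), integral_const_mul, ← hm]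
  simp
  ring

/-- The kernel is dominated by the lazy kernel `(1-γ) I + γ Π` as a bilinear form. -/
lemma bilinear_bound {X : Type*} [MeasurableSpace X] {K : X → Measure X} {π : Measure X}
    [IsProbabilityMeasure π]
    (hK : ∀ x, IsProbabilityMeasure (K x)) (hKmeas : Measurable K) {γ : ℝ} (hγ : γ ≤ 1)
    (hrev : Reversible K π) (hgap : HasAbsSpectralGap K π γ) {p q : X → ℝ}
    (hp : BddMeas p) (hq : BddMeas q) (hq0 : ∀ x, 0 ≤ q x) :
    2 * ∫ x, p x * (∫ y, q y ∂(K x)) ∂π ≤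
      ((1 - γ) * ∫ x, p x ^ 2 ∂π + γ * (∫ x, p x ∂π) ^ 2) +
      ((1 - γ) * ∫ x, q x ^ 2 ∂π + γ * (∫ x, q x ∂π) ^ 2) := by
  set a := ∫ x, p x ∂π with ha
  set b := ∫ x, q x ∂π with hb
  have hinv := integral_invariant hK hKmeas hrev hq hq0
  have hKq := hq.kernel hK hKmeas
  have hq' : BddMeas (fun x => q x - b) := hq.sub (BddMeas.const b)
  have hp' : BddMeas (fun x => p x - a) := hp.sub (BddMeas.const a)
  have hKq' := hq'.kernel hK hKmeas
  have hKeq : ∀ x, ∫ y, (q y - b) ∂(K x) = (∫ y, q y ∂(K x)) - b := fun x => by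
    have := hK x
    rw [integral_sub (hq.integrable _) (integrable_const _)]; simp
  have hq0' : ∫ x, (q x - b) ∂π = 0 := by
    rw [integral_sub (hq.integrable _) (integrable_const _)]; simp [hb]
  have hg := hgap _ (hq'.memLp π) hq0'
  rw [var_expand hq, ← hb] at hg
  have hvp := var_expand (π := π) hp
  rw [← ha] at hvp
  -- centred product
  have hcross : ∫ x, (p x - a) * (∫ y, (q y - b) ∂(K x)) ∂π
      = ∫ x, p x * (∫ y, q y ∂(K x)) ∂π - a * b := by
    have : ∀ x, (p x - a) * (∫ y, (q y - b) ∂(K x)) =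
        p x * (∫ y, q y ∂(K x)) - b * p x - a * (∫ y, q y ∂(K x)) + a * b := fun x => by
      rw [hKeq]; ring
    simp_rw [this]
    have i1 := (hp.mul hKq).integrable π
    have i2 := (hp.integrable π).const_mul b
    have i3 := (hKq.integrable π).const_mul a
    have i12 : Integrable (fun x => p x * (∫ y, q y ∂(K x)) - b * p x) π := i1.sub i2
    have i123 : Integrable (fun x => p x * (∫ y, q y ∂(K x)) - b * p x
      - a * (∫ y, q y ∂(K x))) π := i12.sub i3
    rw [integral_add i123 (integrable_const _), integral_sub i12 i3,
      integral_sub i1 i2, integral_const_mul, integral_const_mul, hinv, ← ha]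
    simp
    ring
  set R := ∫ x, (∫ y, (q y - b) ∂(K x)) ^ 2 ∂π with hR
  set S := ∫ x, (p x - a) * (∫ y, (q y - b) ∂(K x)) ∂π with hS
  set Vp := ∫ x, p x ^ 2 ∂π
  set Vq := ∫ x, q x ^ 2 ∂π
  have hVp : 0 ≤ Vp - a ^ 2 := by
    rw [← hvp]; exact integral_nonneg fun x => sq_nonneg _
  have hVq : 0 ≤ Vq - b ^ 2 := by
    rw [← var_expand hq]; exact integral_nonneg fun x => sq_nonneg _
  have hCS : ∀ c : ℝ, 2 * c * S ≤ c ^ 2 * (Vp - a ^ 2) + R := by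
    intro c
    rw [← hvp, hS, hR, ← integral_const_mul, ← integral_const_mul, ← integral_add
      ((hp'.sq.integrable π).const_mul _) (hKq'.sq.integrable π)]
    refine integral_mono (((hp'.mul hKq').integrable π).const_mul _)
      (((hp'.sq.integrable π).const_mul _).add (hKq'.sq.integrable π)) fun x => ?_
    show 2 * c * ((p x - a) * _) ≤ c ^ 2 * (p x - a) ^ 2 + _
    nlinarith [sq_nonneg (c * (p x - a) - ∫ y, (q y - b) ∂(K x))]
  have h2S : 2 * S ≤ (1 - γ) * (Vp - a ^ 2) + (1 - γ) * (Vq - b ^ 2) := by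
    rcases hγ.eq_or_lt with h1 | h1
    · subst h1
      have hR0 : R ≤ 0 := by simpa using hg
      by_contra hcon
      push Not at hcon
      have hSpos : 0 < S := by linarith
      -- choose `c` small
      have := hCS (S / (Vp - a ^ 2 + 1))
      have hpos : 0 < Vp - a ^ 2 + 1 := by linarith
      have e : (S / (Vp - a ^ 2 + 1)) ^ 2 * (Vp - a ^ 2) ≤ S / (Vp - a ^ 2 + 1) * S := by
        rw [pow_two, mul_assoc]
        refine mul_le_mul_of_nonneg_left ?_ (by positivity)
        rw [div_mul_eq_mul_div, div_le_iff₀ hpos]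
        nlinarith
      have : 0 < S / (Vp - a ^ 2 + 1) * S := by positivity
      linarith
    · have := hCS (1 - γ)
      have h3 : (1 - γ) * (2 * S) ≤ (1 - γ) * ((1 - γ) * (Vp - a ^ 2) + (1 - γ) * (Vq - b ^ 2)) := by
        nlinarith
      exact le_of_mul_le_mul_left h3 (by linarith)
  nlinarith [sq_nonneg (a - b)]

/-- Pointwise estimate. -/
lemma pointwise_bound {γ s v u Λ : ℝ} (hγ : 0 < γ) (hγ1 : γ ≤ 1) (hs : 0 ≤ s) (hs1 : s ≤ 1 / 2)
    (hv : 0 ≤ v) (hu : u ≤ 1) (hΛ : Λ = 1 + 2 * γ * s ^ 2 * v) :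
    0 < Λ - (1 - γ) * Real.exp (γ * s * u) ∧
    γ * Real.exp (γ * s * u) / (Λ - (1 - γ) * Real.exp (γ * s * u)) ≤
      1 / (1 + 2 * s ^ 2 * v) + (Λ * s / (1 + 2 * s ^ 2 * v) ^ 2) * u
       + ((Λ * s) ^ 2 / ((1 + 2 * s ^ 2 * v) ^ 2 * (1 + 2 * s ^ 2 * v - Λ * s))) * u ^ 2 := by
  set A := 1 + 2 * s ^ 2 * v with hA
  have hsv : 0 ≤ s ^ 2 * v := by positivity
  have hΛA : Λ ≤ A := by rw [hΛ, hA]; nlinarith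
  have hΛ1 : 1 ≤ Λ := by rw [hΛ]; nlinarith [mul_nonneg hγ.le hsv]
  have hAΛ : γ * A = Λ - 1 + γ := by rw [hΛ, hA]; ring
  have hA1 : 1 ≤ A := hΛ1.trans hΛA
  set r := Λ * s with hr
  have hr0 : 0 ≤ r := by positivity
  have hrA : r ≤ A / 2 := by rw [hr]; nlinarith
  have hAr : 0 < A - r := by linarith
  have hAru : A - r ≤ A - r * u := by nlinarith
  have hAru0 : 0 < A - r * u := by linarith
  have hE := Real.exp_pos (γ * s * u)
  have hE' : Real.exp (γ * s * u) * Real.exp (-(γ * s * u)) = 1 := by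
    rw [← Real.exp_add]; simp
  have hE1 : 1 - γ * s * u ≤ Real.exp (-(γ * s * u)) := by
    have := Real.add_one_le_exp (-(γ * s * u)); linarith
  set E := Real.exp (γ * s * u) with hEdef
  have hden : E * (γ * (A - r * u)) ≤ Λ - (1 - γ) * E := by
    have h1 : E * (1 - γ * s * u) ≤ 1 := by
      exact (mul_le_mul_of_nonneg_left hE1 hE.le).trans_eq hE'
    have h2 : Λ * (E * (1 - γ * s * u)) ≤ Λ * 1 := mul_le_mul_of_nonneg_left h1 (by linarith)
    have h3 : E * (γ * (A - r * u)) = Λ * (E * (1 - γ * s * u)) - (1 - γ) * E := by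
      rw [hr]
      linear_combination E * hAΛ
    linarith
  have hpos : 0 < E * (γ * (A - r * u)) := by positivity
  refine ⟨lt_of_lt_of_le hpos hden, ?_⟩
  calc γ * E / (Λ - (1 - γ) * E) ≤ γ * E / (E * (γ * (A - r * u))) := by gcongr
    _ = 1 / (A - r * u) := by field_simp
    _ = 1 / A + r / A ^ 2 * u + r ^ 2 * u ^ 2 / (A ^ 2 * (A - r * u)) := by
        field_simp; ring
    _ ≤ 1 / A + r / A ^ 2 * u + r ^ 2 * u ^ 2 / (A ^ 2 * (A - r)) := by gcongr
    _ = _ := by ring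

lemma scalar_total {γ s v Λ : ℝ} (hγ : 0 < γ) (hγ1 : γ ≤ 1) (hs : 0 ≤ s) (hs1 : s ≤ 1 / 2)
    (hv : 0 ≤ v) (hΛ : Λ = 1 + 2 * γ * s ^ 2 * v) :
    1 / (1 + 2 * s ^ 2 * v)
       + ((Λ * s) ^ 2 / ((1 + 2 * s ^ 2 * v) ^ 2 * (1 + 2 * s ^ 2 * v - Λ * s))) * v ≤ 1 := by
  set A := 1 + 2 * s ^ 2 * v with hA
  have hsv : 0 ≤ s ^ 2 * v := by positivity
  have hΛA : Λ ≤ A := by rw [hΛ, hA]; nlinarith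
  have hΛ1 : 1 ≤ Λ := by rw [hΛ]; nlinarith [mul_nonneg hγ.le hsv]
  have hA1 : 1 ≤ A := hΛ1.trans hΛA
  have hrA : Λ * s ≤ A / 2 := by nlinarith
  have hAr : A / 2 ≤ A - Λ * s := by linarith
  have hApos : 0 < A := by linarith
  have h1 : (Λ * s) ^ 2 / (A ^ 2 * (A - Λ * s)) ≤ (A * s) ^ 2 / (A ^ 2 * (A / 2)) := by gcongr
  have h2 : (A * s) ^ 2 / (A ^ 2 * (A / 2)) = 2 * s ^ 2 / A := by field_simp
  have h3 : (Λ * s) ^ 2 / (A ^ 2 * (A - Λ * s)) * v ≤ 2 * s ^ 2 / A * v :=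
    mul_le_mul_of_nonneg_right (h1.trans_eq h2) hv
  have h4 : 1 / A + 2 * s ^ 2 / A * v = 1 := by
    field_simp; rw [hA]
  linarith

/-- The quadratic form bound. -/
lemma form_bound {X : Type*} [MeasurableSpace X] {π : Measure X} [IsProbabilityMeasure π]
    {γ s v Λ : ℝ} (hγ : 0 < γ) (hγ1 : γ ≤ 1) (hs : 0 ≤ s) (hs1 : s ≤ 1 / 2)
    (hv : 0 ≤ v) (hΛ : Λ = 1 + 2 * γ * s ^ 2 * v) {u : X → ℝ} (hu1 : ∀ x, u x ≤ 1)
    (huL : MemLp u 2 π) (hu0 : ∫ x, u x ∂π = 0) (huv : ∫ x, u x ^ 2 ∂π = v)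
    {D : X → ℝ} (hD : BddMeas D) (hD2 : ∀ x, D x ^ 2 = Real.exp (γ * s * u x))
    {f : X → ℝ} (hf : BddMeas f) :
    (1 - γ) * ∫ x, (D x * f x) ^ 2 ∂π + γ * (∫ x, D x * f x ∂π) ^ 2 ≤ Λ * ∫ x, f x ^ 2 ∂π := by
  set c := ∫ x, D x * f x ∂π with hc
  have hDf := hD.mul hf
  have iu : Integrable u π := huL.integrable (by norm_num)
  have iu2 := huL.integrable_sq
  set k0 := 1 / (1 + 2 * s ^ 2 * v) with hk0
  set k1 := (Λ * s / (1 + 2 * s ^ 2 * v) ^ 2) with hk1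
  set k2 := ((Λ * s) ^ 2 / ((1 + 2 * s ^ 2 * v) ^ 2 * (1 + 2 * s ^ 2 * v - Λ * s))) with hk2
  have htot : k0 + k2 * v ≤ 1 := scalar_total hγ hγ1 hs hs1 hv hΛ
  have hpt : ∀ x, 2 * γ * c * (D x * f x) ≤
      (Λ * f x ^ 2 - (1 - γ) * (D x * f x) ^ 2) + γ * c ^ 2 * (k0 + k1 * u x + k2 * u x ^ 2) := by
    intro x
    obtain ⟨hw, hq⟩ := pointwise_bound hγ hγ1 hs hs1 hv (hu1 x) hΛ
    rw [← hD2 x] at hw hq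
    rw [div_le_iff₀ hw] at hq
    set w := Λ - (1 - γ) * D x ^ 2 with hwdef
    set q := k0 + k1 * u x + k2 * u x ^ 2 with hqdef
    have e : Λ * f x ^ 2 - (1 - γ) * (D x * f x) ^ 2 = w * f x ^ 2 := by rw [hwdef]; ring
    rw [e]
    have h1 : 0 ≤ (w * f x - γ * c * D x) ^ 2 := sq_nonneg _
    have h2 : γ * c ^ 2 * (γ * D x ^ 2) ≤ γ * c ^ 2 * (q * w) :=
      mul_le_mul_of_nonneg_left hq (by positivity)
    have h3 : w * (2 * γ * c * (D x * f x)) ≤ w * (w * f x ^ 2 + γ * c ^ 2 * q) := by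
      nlinarith
    exact le_of_mul_le_mul_left h3 hw
  have i1 := (hDf.integrable π).const_mul (2 * γ * c)
  have i2 := (hf.sq.integrable π).const_mul Λ
  have i3 := (hDf.sq.integrable π).const_mul (1 - γ)
  have i4 : Integrable (fun x => k0 + k1 * u x) π := (integrable_const k0).add (iu.const_mul k1)
  have i5 : Integrable (fun x => k0 + k1 * u x + k2 * u x ^ 2) π := i4.add (iu2.const_mul k2)
  have i23 : Integrable (fun x => Λ * f x ^ 2 - (1 - γ) * (D x * f x) ^ 2) π := i2.sub i3
  have hint := integral_mono i1 (i23.add (i5.const_mul (γ * c ^ 2))) hpt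
  have e1 : ∫ x, (k0 + k1 * u x + k2 * u x ^ 2) ∂π = k0 + k2 * v := by
    rw [integral_add i4 (iu2.const_mul k2), integral_add (integrable_const _) (iu.const_mul k1),
      integral_const_mul, integral_const_mul, hu0, huv]
    simp
  simp only [Pi.add_apply, Pi.sub_apply] at hint
  rw [integral_add i23 (i5.const_mul (γ * c ^ 2)), integral_sub i2 i3,
    integral_const_mul, integral_const_mul, integral_const_mul, integral_const_mul, e1, ← hc]
    at hint
  have : γ * c ^ 2 * (k0 + k2 * v) ≤ γ * c ^ 2 * 1 :=
    mul_le_mul_of_nonneg_left htot (by positivity)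
  nlinarith

/-- The weighted transition operator. -/
noncomputable def wOp {X : Type*} [MeasurableSpace X] (K : X → Measure X) (D : X → ℝ)
    (h : X → ℝ) : X → ℝ := fun x => ∫ y, D y ^ 2 * h y ∂(K x)

lemma wOp_bdd {X : Type*} [MeasurableSpace X] {K : X → Measure X}
    (hK : ∀ x, IsProbabilityMeasure (K x)) (hKmeas : Measurable K) {D : X → ℝ} (hD : BddMeas D)
    {h : X → ℝ} (hh : BddMeas h) : BddMeas (wOp K D h) :=
  (hD.sq.mul hh).kernel hK hKmeas

lemma wOp_nonneg {X : Type*} [MeasurableSpace X] {K : X → Measure X} {D : X → ℝ}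
    {h : X → ℝ} (hh : ∀ x, 0 ≤ h x) : ∀ x, 0 ≤ wOp K D h x :=
  fun _ => integral_nonneg fun y => mul_nonneg (sq_nonneg _) (hh y)

lemma norm_step {X : Type*} [MeasurableSpace X] {K : X → Measure X} {π : Measure X}
    [IsProbabilityMeasure π]
    (hK : ∀ x, IsProbabilityMeasure (K x)) (hKmeas : Measurable K) {γ Λ : ℝ} (hγ : γ ≤ 1)
    (hΛ : 0 < Λ)
    (hrev : Reversible K π) (hgap : HasAbsSpectralGap K π γ)
    {D : X → ℝ} (hD : BddMeas D) (hD0 : ∀ x, 0 ≤ D x)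
    (hform : ∀ f : X → ℝ, BddMeas f →
      (1 - γ) * ∫ x, (D x * f x) ^ 2 ∂π + γ * (∫ x, D x * f x ∂π) ^ 2 ≤ Λ * ∫ x, f x ^ 2 ∂π)
    {h : X → ℝ} (hh : BddMeas h) (hh0 : ∀ x, 0 ≤ h x) :
    ∫ x, (D x * wOp K D h x) ^ 2 ∂π ≤ Λ ^ 2 * ∫ x, (D x * h x) ^ 2 ∂π := by
  set F : X → ℝ := fun x => D x * wOp K D h x with hF
  have hFb : BddMeas F := hD.mul (wOp_bdd hK hKmeas hD hh)
  set q : X → ℝ := fun x => D x * (Λ * (D x * h x)) with hq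
  have hgb : BddMeas (fun x => Λ * (D x * h x)) := (BddMeas.const Λ).mul (hD.mul hh)
  have hqb : BddMeas q := hD.mul hgb
  have hq0 : ∀ x, 0 ≤ q x := fun x =>
    mul_nonneg (hD0 x) (mul_nonneg hΛ.le (mul_nonneg (hD0 x) (hh0 x)))
  have hb := bilinear_bound hK hKmeas hγ hrev hgap (hD.mul hFb) hqb hq0
  have e1 : ∫ x, D x * F x * (∫ y, q y ∂(K x)) ∂π = Λ * ∫ x, F x ^ 2 ∂π := by
    rw [← integral_const_mul]
    refine integral_congr_ae (ae_of_all _ fun x => ?_)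
    have : ∫ y, q y ∂(K x) = Λ * wOp K D h x := by
      rw [wOp, ← integral_const_mul]
      refine integral_congr_ae (ae_of_all _ fun y => ?_)
      simp only [hq]; ring
    simp only [this, hF]; ring
  have f1 := hform F hFb
  have f2 := hform _ hgb
  have e2 : ∫ x, (Λ * (D x * h x)) ^ 2 ∂π = Λ ^ 2 * ∫ x, (D x * h x) ^ 2 ∂π := by
    rw [← integral_const_mul]
    refine integral_congr_ae (ae_of_all _ fun x => ?_)
    simp only; ring
  rw [e2] at f2
  rw [e1] at hb
  have : Λ * ∫ x, F x ^ 2 ∂π ≤ Λ * (Λ ^ 2 * ∫ x, (D x * h x) ^ 2 ∂π) := by linarith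
  exact le_of_mul_le_mul_left this hΛ

lemma iter_props {X : Type*} [MeasurableSpace X] {K : X → Measure X}
    (hK : ∀ x, IsProbabilityMeasure (K x)) (hKmeas : Measurable K) {D : X → ℝ} (hD : BddMeas D)
    (n : ℕ) {h : X → ℝ} (hh : BddMeas h) (hh0 : ∀ x, 0 ≤ h x) :
    BddMeas ((wOp K D)^[n] h) ∧ ∀ x, 0 ≤ (wOp K D)^[n] h x := by
  induction n with
  | zero => exact ⟨hh, hh0⟩
  | succ n ih =>
    rw [Function.iterate_succ_apply']
    exact ⟨wOp_bdd hK hKmeas hD ih.1, wOp_nonneg ih.2⟩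

lemma iter_bound {X : Type*} [MeasurableSpace X] {K : X → Measure X} {π : Measure X}
    [IsProbabilityMeasure π]
    (hK : ∀ x, IsProbabilityMeasure (K x)) (hKmeas : Measurable K) {γ Λ : ℝ} (hγ : γ ≤ 1)
    (hΛ : 0 < Λ)
    (hrev : Reversible K π) (hgap : HasAbsSpectralGap K π γ)
    {D : X → ℝ} (hD : BddMeas D) (hD0 : ∀ x, 0 ≤ D x)
    (hform : ∀ f : X → ℝ, BddMeas f →
      (1 - γ) * ∫ x, (D x * f x) ^ 2 ∂π + γ * (∫ x, D x * f x ∂π) ^ 2 ≤ Λ * ∫ x, f x ^ 2 ∂π)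
    (n : ℕ) :
    ∫ x, D x ^ 2 * (wOp K D)^[n] (fun _ => 1) x ∂π ≤ Λ ^ (n + 1) := by
  have hp := fun n => iter_props hK hKmeas hD n (BddMeas.const (1 : ℝ)) (fun _ => zero_le_one)
  have hN : ∀ n, ∫ x, (D x * (wOp K D)^[n] (fun _ => 1) x) ^ 2 ∂π ≤
      (Λ ^ n) ^ 2 * ∫ x, D x ^ 2 ∂π := by
    intro n
    induction n with
    | zero => simp
    | succ n ih =>
      have := norm_step hK hKmeas hγ hΛ hrev hgap hD hD0 hform (hp n).1 (hp n).2
      rw [Function.iterate_succ_apply']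
      calc _ ≤ _ := this
        _ ≤ Λ ^ 2 * ((Λ ^ n) ^ 2 * ∫ x, D x ^ 2 ∂π) := by gcongr
        _ = _ := by ring
  set E := ∫ x, D x ^ 2 ∂π with hE
  have hE0 : 0 ≤ E := integral_nonneg fun x => sq_nonneg _
  have hEΛ : E ≤ Λ := by
    have h1 := hform D hD
    have h2 := var_expand (π := π) (hD.mul hD)
    have h3 : 0 ≤ ∫ x, (D x * D x - ∫ y, D y * D y ∂π) ^ 2 ∂π := integral_nonneg fun x => sq_nonneg _
    have h4 : ∫ x, D x * D x ∂π = E := by simp only [hE, pow_two]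
    rw [h2, h4] at h3
    rw [h4, ← hE] at h1
    by_contra hcon
    push Not at hcon
    have : (1 - γ) * E ^ 2 ≤ (1 - γ) * ∫ x, (D x * D x) ^ 2 ∂π :=
      mul_le_mul_of_nonneg_left (by linarith) (by linarith)
    nlinarith
  set F := (wOp K D)^[n] (fun _ => (1 : ℝ)) with hF
  have hDF := hD.mul (hp n).1
  have hL : 0 < Λ ^ n := by positivity
  -- AM-GM
  have key : 2 * Λ ^ n * ∫ x, D x ^ 2 * F x ∂π ≤
      (Λ ^ n) ^ 2 * E + ∫ x, (D x * F x) ^ 2 ∂π := by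
    rw [hE, ← integral_const_mul, ← integral_const_mul,
      ← integral_add ((hD.sq.integrable π).const_mul _) (hDF.sq.integrable π)]
    refine integral_mono (((hD.sq.mul (hp n).1).integrable π).const_mul _)
      (((hD.sq.integrable π).const_mul _).add (hDF.sq.integrable π)) fun x => ?_
    show 2 * Λ ^ n * (D x ^ 2 * F x) ≤ (Λ ^ n) ^ 2 * D x ^ 2 + (D x * F x) ^ 2
    nlinarith [sq_nonneg (Λ ^ n * D x - D x * F x)]
  have h5 : Λ ^ n * ∫ x, D x ^ 2 * F x ∂π ≤ Λ ^ n * (Λ ^ n * E) := by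
    have := hN n
    nlinarith
  have h6 := le_of_mul_le_mul_left h5 hL
  calc _ ≤ _ := h6
    _ ≤ Λ ^ n * Λ := by gcongr
    _ = _ := by ring

lemma measurable_snoc {X : Type*} [MeasurableSpace X] (n : ℕ) :
    Measurable (fun p : (Fin (n + 1) → X) × X =>
      (Fin.snoc (α := fun _ => X) p.1 p.2 : Fin (n + 1 + 1) → X)) := by
  rw [measurable_pi_iff]
  intro i
  refine Fin.lastCases ?_ (fun j => ?_) i
  · simp only [Fin.snoc_last]; exact measurable_snd
  · simp only [Fin.snoc_castSucc]; exact (measurable_pi_apply j).comp measurable_fst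

lemma measurable_step {X : Type*} [MeasurableSpace X] {K : X → Measure X}
    (hK : ∀ x, IsProbabilityMeasure (K x)) (hKmeas : Measurable K) (n : ℕ) :
    Measurable (fun xs : Fin (n + 1) → X =>
      (K (xs (Fin.last n))).map (Fin.snoc (α := fun _ => X) xs)) := by
  let κ : Kernel X X := ⟨K, hKmeas⟩
  have : IsMarkovKernel κ := ⟨hK⟩
  let κ' : Kernel (Fin (n + 1) → X) X := κ.comap (fun xs => xs (Fin.last n)) (measurable_pi_apply _)
  let η := (Kernel.id ×ₖ κ').map (fun p : (Fin (n + 1) → X) × X =>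
      (Fin.snoc (α := fun _ => X) p.1 p.2 : Fin (n + 1 + 1) → X))
  have : (fun xs : Fin (n + 1) → X =>
      (K (xs (Fin.last n))).map (Fin.snoc (α := fun _ => X) xs)) = η := by
    funext xs
    rw [Kernel.map_apply _ (measurable_snoc n), Kernel.prod_apply, Kernel.id_apply,
      Measure.dirac_prod, Measure.map_map (measurable_snoc n) measurable_prodMk_left]
    rfl
  rw [this]
  exact η.measurable

lemma chain_lintegral {X : Type*} [MeasurableSpace X] {K : X → Measure X}
    (hK : ∀ x, IsProbabilityMeasure (K x)) (hKmeas : Measurable K) (μ : Measure X)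
    {D : X → ℝ} (hD : BddMeas D) (n : ℕ) :
    ∀ h : X → ℝ, BddMeas h → (∀ x, 0 ≤ h x) →
    ∫⁻ xs, ENNReal.ofReal ((∏ i, D (xs i) ^ 2) * h (xs (Fin.last n))) ∂(chainLaw K μ n) =
      ∫⁻ x, ENNReal.ofReal (D x ^ 2 * (wOp K D)^[n] h x) ∂μ := by
  have hmeas : ∀ n (h : X → ℝ), BddMeas h → Measurable (fun xs : Fin (n + 1) → X =>
      ENNReal.ofReal ((∏ i, D (xs i) ^ 2) * h (xs (Fin.last n)))) := by
    intro n h hh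
    refine Measurable.ennreal_ofReal (Measurable.mul ?_ (hh.1.comp (measurable_pi_apply _)))
    exact Finset.measurable_prod _ fun i _ => (hD.1.comp (measurable_pi_apply i)).pow_const 2
  induction n with
  | zero =>
    intro h hh h0
    have hc : Measurable (fun (x : X) (_ : Fin (0 + 1)) => x) :=
      measurable_pi_lambda _ fun _ => measurable_id
    rw [chainLaw, lintegral_map (hmeas 0 h hh) hc]
    simp
  | succ n ih =>
    intro h hh h0
    rw [chainLaw, Measure.lintegral_bind (measurable_step hK hKmeas n).aemeasurable
      (hmeas (n + 1) h hh).aemeasurable, Function.iterate_succ_apply,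
      ← ih _ (wOp_bdd hK hKmeas hD hh) (wOp_nonneg h0)]
    refine lintegral_congr fun xs => ?_
    have := hK (xs (Fin.last n))
    have hsn : Measurable (Fin.snoc (α := fun _ => X) xs : X → (Fin (n + 1 + 1) → X)) :=
      (measurable_snoc n).comp measurable_prodMk_left
    rw [lintegral_map (hmeas (n + 1) h hh) hsn, wOp,
      ENNReal.ofReal_mul (Finset.prod_nonneg fun i _ => sq_nonneg _),
      ofReal_integral_eq_lintegral_ofReal ((hD.sq.mul hh).integrable _)
        (ae_of_all _ fun y => mul_nonneg (sq_nonneg _) (h0 y)),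
      ← lintegral_const_mul _ (hD.sq.mul hh).1.ennreal_ofReal]
    refine lintegral_congr fun y => ?_
    rw [Fin.prod_univ_castSucc]
    simp only [Fin.snoc_castSucc, Fin.snoc_last]
    rw [← ENNReal.ofReal_mul (Finset.prod_nonneg fun i _ => sq_nonneg _), mul_assoc]

/-- The moment generating function bound. -/
lemma chain_mgf {X : Type*} [MeasurableSpace X] {K : X → Measure X} {π μt : Measure X}
    [IsProbabilityMeasure π]
    (hK : ∀ x, IsProbabilityMeasure (K x)) (hKmeas : Measurable K)
    (hrev : Reversible K π) {γ : ℝ} (hgap : HasAbsSpectralGap K π γ)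
    {W : ℝ} (hW : 1 ≤ W) (hwarm : IsWarm μt π W) (n : ℕ)
    {s v Λ : ℝ} (hγ : 0 < γ) (hγ1 : γ ≤ 1) (hs : 0 ≤ s) (hs1 : s ≤ 1 / 2)
    (hv : 0 ≤ v) (hΛ : Λ = 1 + 2 * γ * s ^ 2 * v) {u : X → ℝ} (hum : Measurable u)
    (hu1 : ∀ x, u x ≤ 1)
    (huL : MemLp u 2 π) (hu0 : ∫ x, u x ∂π = 0) (huv : ∫ x, u x ^ 2 ∂π = v) :
    ∫⁻ xs, ENNReal.ofReal (Real.exp (γ * s * ∑ i, u (xs i))) ∂(chainLaw K μt n) ≤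
      ENNReal.ofReal (W * Λ ^ (n + 1)) := by
  set D : X → ℝ := fun x => Real.exp (γ * s * u x / 2) with hDdef
  have hD2 : ∀ x, D x ^ 2 = Real.exp (γ * s * u x) := fun x => by
    rw [hDdef, ← Real.exp_nat_mul]; congr 1; push_cast; ring
  have hD0 : ∀ x, 0 ≤ D x := fun x => (Real.exp_pos _).le
  have hD : BddMeas D := by
    refine ⟨by fun_prop, Real.exp (γ * s / 2), fun x => ?_⟩
    rw [abs_of_nonneg (hD0 x)]
    apply Real.exp_le_exp.mpr
    have : γ * s * u x ≤ γ * s * 1 := mul_le_mul_of_nonneg_left (hu1 x) (by positivity)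
    linarith
  have hΛ0 : 0 < Λ := by rw [hΛ]; positivity
  have hb := iter_bound hK hKmeas hγ1 hΛ0 hrev hgap hD hD0
    (fun f hf => form_bound hγ hγ1 hs hs1 hv hΛ hu1 huL hu0 huv hD hD2 hf) n
  have hc := chain_lintegral hK hKmeas μt hD n (fun _ => 1) (BddMeas.const 1)
    (fun _ => zero_le_one)
  have hp := iter_props hK hKmeas hD n (BddMeas.const (1 : ℝ)) (fun _ => zero_le_one)
  have e : ∀ xs : Fin (n + 1) → X, Real.exp (γ * s * ∑ i, u (xs i)) =
      (∏ i, D (xs i) ^ 2) * 1 := fun xs => by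
    simp_rw [hD2, mul_one, ← Real.exp_sum, Finset.mul_sum]
  simp_rw [e]
  rw [hc]
  have hle : μt ≤ ENNReal.ofReal W • π := by
    refine Measure.le_iff.mpr fun A hA => ?_
    simpa using hwarm A hA
  calc _ ≤ ∫⁻ x, ENNReal.ofReal (D x ^ 2 * (wOp K D)^[n] (fun _ => 1) x) ∂(ENNReal.ofReal W • π) :=
        lintegral_mono' hle le_rfl
    _ = ENNReal.ofReal W * ENNReal.ofReal (∫ x, D x ^ 2 * (wOp K D)^[n] (fun _ => 1) x ∂π) := by
        rw [lintegral_smul_measure, ofReal_integral_eq_lintegral_ofReal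
          ((hD.sq.mul hp.1).integrable π)
          (ae_of_all _ fun x => mul_nonneg (sq_nonneg _) (hp.2 x))]
        rfl
    _ ≤ ENNReal.ofReal W * ENNReal.ofReal (Λ ^ (n + 1)) := by gcongr
    _ = _ := by rw [ENNReal.ofReal_mul (by linarith)]

/-- Choice of the parameter. -/
lemma choose_s {χ β : ℝ} (hχ : 0 < χ) (hβ : 0 < β) (hχβ : χ / 2 ≤ β) :
    ∃ s : ℝ, 0 ≤ s ∧ s ≤ 1 / 2 ∧
      (1 / 2) * min ((β / (2 * χ) - 1 / 4) ^ 2) ((β - χ / 2) / 10) ≤ s * β - 2 * s ^ 2 * χ ^ 2 := by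
  rcases le_total (β / (4 * χ ^ 2)) (1 / 10) with h | h
  · refine ⟨β / (4 * χ ^ 2), by positivity, by linarith, ?_⟩
    have e : β / (4 * χ ^ 2) * β - 2 * (β / (4 * χ ^ 2)) ^ 2 * χ ^ 2 =
        (1 / 2) * (β / (2 * χ)) ^ 2 := by field_simp; ring
    rw [e]
    have h0 : 1 / 4 ≤ β / (2 * χ) := by rw [le_div_iff₀ (by positivity)]; linarith
    have : (β / (2 * χ) - 1 / 4) ^ 2 ≤ (β / (2 * χ)) ^ 2 := by nlinarith
    have := min_le_left ((β / (2 * χ) - 1 / 4) ^ 2) ((β - χ / 2) / 10)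
    linarith
  · refine ⟨1 / 10, by norm_num, by norm_num, ?_⟩
    rw [le_div_iff₀ (by positivity)] at h
    have := min_le_right ((β / (2 * χ) - 1 / 4) ^ 2) ((β - χ / 2) / 10)
    nlinarith

theorem stmt17 {X : Type*} [MeasurableSpace X] (K : X → Measure X) (π μt : Measure X)
    (hK : ∀ x, IsProbabilityMeasure (K x)) (hKmeas : Measurable K)
    [IsProbabilityMeasure π] [IsProbabilityMeasure μt]
    (γ : ℝ) (hγ : γ ∈ Set.Ioc (0 : ℝ) 1)
    (hrev : Reversible K π) (hgap : HasAbsSpectralGap K π γ)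
    (W : ℝ) (hW : 1 ≤ W) (hwarm : IsWarm μt π W)
    (n : ℕ) -- the chain has length `P = n + 1 ≥ 1`
    (G : X → ℝ) (hGmeas : Measurable G) (hGnonneg : ∀ x, 0 ≤ G x)
    (hGL2 : MemLp G 2 π) (hGmean : 0 < ∫ x, G x ∂π)
    (hGvar : 0 < (∫ x, (G x) ^ 2 ∂π) - (∫ x, G x ∂π) ^ 2)
    (χ : ℝ)
    (hχ : χ = Real.sqrt ((∫ x, (G x) ^ 2 ∂π) - (∫ x, G x ∂π) ^ 2) / ∫ x, G x ∂π) :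
    ∀ β : ℝ, β ∈ Set.Ioo (0 : ℝ) 1 → χ / 2 ≤ β →
      (chainLaw K μt n)
          {xs | (((n : ℝ) + 1))⁻¹ * (∑ i, G (xs i)) ≤ (1 - β) * ∫ x, G x ∂π} ≤
        ENNReal.ofReal
          (W * Real.exp (-(((n : ℝ) + 1) * γ / 2) *
            min ((β / (2 * χ) - 1 / 4) ^ 2) ((β - χ / 2) / 10))) := by
  intro β hβ hχβ
  set m := ∫ x, G x ∂π with hm
  set V := ∫ x, (G x) ^ 2 ∂π with hV
  have hχ0 : 0 < χ := by rw [hχ]; have := Real.sqrt_pos.mpr hGvar; positivity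
  have hχ2 : χ ^ 2 = (V - m ^ 2) / m ^ 2 := by
    rw [hχ, div_pow, Real.sq_sqrt hGvar.le]
  obtain ⟨s, hs, hs1, hsb⟩ := choose_s hχ0 hβ.1 hχβ
  set u : X → ℝ := fun x => 1 - G x / m with hu
  have hum : Measurable u := by fun_prop
  have hu1 : ∀ x, u x ≤ 1 := fun x => by
    have := div_nonneg (hGnonneg x) hGmean.le
    simp only [hu]; linarith
  have huL : MemLp u 2 π := by
    have h1 : MemLp (fun x => m⁻¹ * G x) 2 π := hGL2.const_mul m⁻¹
    have h2 := (memLp_const (1 : ℝ) (μ := π) (p := 2)).sub h1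
    refine h2.congr_norm hum.aestronglyMeasurable (ae_of_all _ fun x => ?_)
    simp only [hu, Pi.sub_apply]; congr 1; ring
  have iG : Integrable G π := hGL2.integrable (by norm_num)
  have iG2 := hGL2.integrable_sq
  have hu0 : ∫ x, u x ∂π = 0 := by
    simp only [hu]
    rw [integral_sub (integrable_const _) (iG.div_const m), integral_div, ← hm, div_self hGmean.ne']
    simp
  have huv : ∫ x, u x ^ 2 ∂π = χ ^ 2 := by
    have : ∀ x, u x ^ 2 = (1 - (2 / m) * G x) + (1 / m ^ 2) * G x ^ 2 := fun x => by
      simp only [hu]; ring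
    simp_rw [this]
    have i1 : Integrable (fun x => 1 - (2 / m) * G x) π :=
      (integrable_const (1 : ℝ)).sub (iG.const_mul _)
    rw [integral_add i1 (iG2.const_mul _), integral_sub (integrable_const _) (iG.const_mul _),
      integral_const_mul, integral_const_mul, ← hm, ← hV, hχ2]
    simp
    field_simp
    ring
  have hmgf := chain_mgf hK hKmeas hrev hgap hW hwarm n hγ.1 hγ.2 hs hs1 (sq_nonneg χ) rfl
    hum hu1 huL hu0 huv
  set Λ := 1 + 2 * γ * s ^ 2 * χ ^ 2 with hΛ
  set N : ℝ := (n : ℝ) + 1 with hN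
  have hN0 : 0 < N := by positivity
  set c := Real.exp (γ * s * (N * β)) with hc
  have hc0 : 0 < c := Real.exp_pos _
  have hsub : {xs : Fin (n + 1) → X | N⁻¹ * (∑ i, G (xs i)) ≤ (1 - β) * m} ⊆
      {xs | ENNReal.ofReal c ≤ ENNReal.ofReal (Real.exp (γ * s * ∑ i, u (xs i)))} := by
    intro xs hxs
    simp only [Set.mem_ofPred_eq] at hxs ⊢
    apply ENNReal.ofReal_le_ofReal
    apply Real.exp_le_exp.mpr
    refine mul_le_mul_of_nonneg_left ?_ (mul_nonneg hγ.1.le hs)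
    have e : ∑ i, u (xs i) = N - (∑ i, G (xs i)) / m := by
      simp only [hu, Finset.sum_sub_distrib, Finset.sum_div]
      simp [hN]
    rw [e]
    rw [inv_mul_le_iff₀ hN0] at hxs
    have : (∑ i, G (xs i)) / m ≤ N * (1 - β) := by
      rw [div_le_iff₀ hGmean]; linarith
    linarith
  have hmark := mul_meas_ge_le_lintegral₀ (μ := chainLaw K μt n)
    (f := fun xs : Fin (n + 1) → X => ENNReal.ofReal (Real.exp (γ * s * ∑ i, u (xs i))))
    (by
      refine Measurable.aemeasurable ?_
      refine Measurable.ennreal_ofReal (Real.measurable_exp.comp (Measurable.const_mul ?_ _))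
      exact Finset.measurable_sum _ fun i _ => hum.comp (measurable_pi_apply i))
    (ENNReal.ofReal c)
  have h1 : ENNReal.ofReal c * (chainLaw K μt n)
      {xs | N⁻¹ * (∑ i, G (xs i)) ≤ (1 - β) * m} ≤ ENNReal.ofReal (W * Λ ^ (n + 1)) :=
    (mul_le_mul_right (measure_mono hsub) _).trans (hmark.trans hmgf)
  have hfin : W * Λ ^ (n + 1) ≤ c * (W * Real.exp (-(N * γ / 2) *
            min ((β / (2 * χ) - 1 / 4) ^ 2) ((β - χ / 2) / 10))) := by
    have h2 : Λ ≤ Real.exp (2 * γ * s ^ 2 * χ ^ 2) := by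
      have := Real.add_one_le_exp (2 * γ * s ^ 2 * χ ^ 2); linarith
    have hΛ0 : 0 ≤ Λ := by have := hγ.1.le; positivity
    have h3 : Λ ^ (n + 1) ≤ Real.exp (N * (2 * γ * s ^ 2 * χ ^ 2)) := by
      calc Λ ^ (n + 1) ≤ Real.exp (2 * γ * s ^ 2 * χ ^ 2) ^ (n + 1) := by gcongr
        _ = _ := by rw [← Real.exp_nat_mul]; push_cast; rfl
    rw [mul_left_comm]
    refine mul_le_mul_of_nonneg_left (h3.trans ?_) (by linarith)
    rw [hc, ← Real.exp_add]
    apply Real.exp_le_exp.mpr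
    have := mul_le_mul_of_nonneg_left hsb (mul_nonneg hN0.le hγ.1.le)
    linarith
  have h4 := h1.trans (ENNReal.ofReal_le_ofReal hfin)
  rw [ENNReal.ofReal_mul hc0.le] at h4
  exact (ENNReal.mul_le_mul_iff_right (by simpa using hc0) ENNReal.ofReal_ne_top).mp h4
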